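/- arXiv:1308.4334 — 7 statements merged into one kernel-verified Lean document; each statement's English description precedes it below -/
import Mathlib

section
/- Let T be a tree (finite connected simple graph with no cycles) with v vertices, each edge having length 1, and let d denote the graph distance. Then for every vertex p of T, one has v - 1 = \sum_{q \in V(T)} (2 - \deg(q)) \cdot d(p,q), where \deg(q) is the degree (valence) of the vertex q. -/
/-!
Write `d q = G.dist p q`, and let the Laplacian of `g` at `q` be the sum of `g w - g q` over the
neighbours `w` of `q`. Summing the Laplacian of `d ^ 2` over all vertices gives zero. In a tree,
the neighbours of `q ≠ p` are one vertex at distance `d q - 1` (`existsUnique_adj_dist_succ`) and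
`deg q - 1` vertices at distance `d q + 1`, so the Laplacian of `d` at `q` is `deg q - 2`. As
`(d q ± 1) ^ 2 - d q ^ 2 = 1 ± 2 * d q`, the Laplacian of `d ^ 2` at `q` is
`deg q + 2 * d q * (deg q - 2)`, also at `q = p`, where `d q = 0`. Hence
`2 * ∑ q, (2 - deg q) * d q = ∑ q, deg q`, which is twice the number `v - 1` of edges.
-/

/-- The Wiener index of a graph: half the sum of all pairwise graph distances. -/
noncomputable def wienerIndex {V : Type*} [Fintype V] (G : SimpleGraph V) : ℕ :=
  (∑ p : V, ∑ q : V, G.dist p q) / 2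

theorem sum_sum_neighborFinset_sub_eq_zero {V : Type*} [Fintype V]
    (G : SimpleGraph V) [DecidableRel G.Adj] (g : V → ℤ) :
    ∑ q : V, ∑ w ∈ G.neighborFinset q, (g w - g q) = 0 := by
  have hswap : ∑ q : V, ∑ w ∈ G.neighborFinset q, g w = ∑ q : V, ∑ w ∈ G.neighborFinset q, g q :=
    Finset.sum_comm' fun x y => by simp [G.adj_comm]
  simp only [Finset.sum_sub_distrib]
  rw [hswap, sub_self]

theorem existsUnique_adj_dist_succ {V : Type*} {G : SimpleGraph V} (hT : G.IsTree)
    {p q : V} (hq : q ≠ p) : ∃! w, G.Adj q w ∧ G.dist p q = G.dist p w + 1 := by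
  obtain ⟨P, hP, hPlen⟩ := hT.connected.exists_path_of_dist p q
  have hnil : ¬ P.Nil := SimpleGraph.Walk.not_nil_of_ne hq.symm
  refine ⟨P.penultimate, ⟨(P.adj_penultimate hnil).symm, ?_⟩, ?_⟩
  · have hle := SimpleGraph.dist_le P.dropLast
    have hlen : P.dropLast.length = P.length - 1 := by simp
    have := hT.dist_eq_dist_add_one_of_adj p (P.adj_penultimate hnil)
    omega
  · rintro w ⟨hw, hd⟩
    -- A geodesic to `w` extends to a geodesic to `q`, which must be the path `P`.
    obtain ⟨Q, -, hQlen⟩ := hT.connected.exists_path_of_dist p w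
    have hR : (Q.concat hw.symm).IsPath :=
      SimpleGraph.Walk.isPath_of_length_eq_dist _ (by simp [hQlen, hd])
    rw [← (hT.existsUnique_path p q).unique hR hP, SimpleGraph.Walk.penultimate_concat]

theorem sum_neighborFinset_dist_sub {V : Type*} [Fintype V]
    {G : SimpleGraph V} [DecidableRel G.Adj] (hT : G.IsTree) {p q : V} (hq : q ≠ p) :
    ∑ w ∈ G.neighborFinset q, ((G.dist p w : ℤ) - G.dist p q) = G.degree q - 2 := by
  classical
  obtain ⟨u, ⟨hu, hdu⟩, huniq⟩ := existsUnique_adj_dist_succ hT hq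
  have hterm : ∀ w ∈ G.neighborFinset q,
      ((G.dist p w : ℤ) - G.dist p q) = 1 - if w = u then 2 else 0 := by
    intro w hw
    rw [SimpleGraph.mem_neighborFinset] at hw
    split_ifs with h
    · subst h
      omega
    · rcases hT.dist_eq_dist_add_one_of_adj p hw with h' | h'
      · exact absurd (huniq w ⟨hw, h'⟩) h
      · omega
  rw [Finset.sum_congr rfl hterm, Finset.sum_sub_distrib]
  simp [hu]

theorem sum_neighborFinset_dist_sq_sub {V : Type*} [Fintype V]
    {G : SimpleGraph V} [DecidableRel G.Adj] (hT : G.IsTree) (p q : V) :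
    ∑ w ∈ G.neighborFinset q, ((G.dist p w : ℤ) ^ 2 - (G.dist p q : ℤ) ^ 2) =
      G.degree q + 2 * G.dist p q * (G.degree q - 2) := by
  have hterm : ∀ w ∈ G.neighborFinset q, (G.dist p w : ℤ) ^ 2 - (G.dist p q : ℤ) ^ 2 =
      1 + 2 * G.dist p q * ((G.dist p w : ℤ) - G.dist p q) := by
    intro w hw
    rw [SimpleGraph.mem_neighborFinset] at hw
    rcases hT.dist_eq_dist_add_one_of_adj p hw with h | h <;> rw [h] <;> push_cast <;> ring
  rw [Finset.sum_congr rfl hterm, Finset.sum_add_distrib, ← Finset.mul_sum]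
  rcases eq_or_ne q p with rfl | hq
  · simp
  · simp [-Finset.sum_sub_distrib, sum_neighborFinset_dist_sub hT hq]

/-- For a tree `T` on `v` vertices (each edge of length 1) and any vertex `p`,
`v - 1 = ∑_q (2 - deg q) · d(p,q)`. -/
theorem tree_sum_two_sub_degree_mul_dist {V : Type*} [Fintype V]
    (G : SimpleGraph V) [DecidableRel G.Adj] (hT : G.IsTree) (p : V) :
    (Fintype.card V : ℤ) - 1 =
      ∑ q : V, (2 - (G.degree q : ℤ)) * (G.dist p q : ℤ) := by
  classical
  have h0 := sum_sum_neighborFinset_sub_eq_zero G fun q => (G.dist p q : ℤ) ^ 2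
  simp only [sum_neighborFinset_dist_sq_sub hT p] at h0
  have hdeg : (∑ q : V, (G.degree q : ℤ)) = 2 * (G.edgeFinset.card : ℤ) := by
    exact_mod_cast G.sum_degrees_eq_twice_card_edges
  have hcard : (G.edgeFinset.card : ℤ) + 1 = Fintype.card V := by
    exact_mod_cast hT.card_edgeFinset
  have hsum : ∑ q : V, 2 * (G.dist p q : ℤ) * (G.degree q - 2) =
      -2 * ∑ q : V, (2 - (G.degree q : ℤ)) * (G.dist p q : ℤ) := by
    rw [Finset.mul_sum]
    exact Finset.sum_congr rfl fun q _ => by ring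
  rw [Finset.sum_add_distrib, hdeg, hsum] at h0
  linarith
end

section
/- Let T be a tree with v vertices, each edge having length 1, let d denote the graph distance, and let W(T) = (1/2) \sum_{p,q \in V(T)} d(p,q) be its Wiener index. Then 4\,W(T) = v(v-1) + \sum_{p,q \in V(T)} \deg(q) \cdot d(p,q), where both sums run over all ordered pairs of vertices. -/
/-- Existence and uniqueness of the parent: appending the edge `r q` to a shortest path from `p` to
a closer neighbour `r` gives the unique path from `p` to `q`, so `r` is its penultimate vertex. -/
lemma exists_parent {V : Type*} {G : SimpleGraph V} (hT : G.IsTree) {p q : V} (hq : q ≠ p) :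
    ∃ r₀, G.Adj q r₀ ∧ ∀ r, G.Adj q r → (G.dist p q = G.dist p r + 1 ↔ r = r₀) := by
  obtain ⟨w, hw, hwl⟩ := hT.connected.exists_path_of_dist p q
  have hnil : ¬ w.Nil := fun h => hq h.eq.symm
  have huniq : ∀ r, G.Adj q r → G.dist p q = G.dist p r + 1 → r = w.penultimate := by
    intro r hr h
    obtain ⟨w', hw', hwl'⟩ := hT.connected.exists_path_of_dist p r
    have hc : (w'.concat hr.symm).IsPath := by
      apply SimpleGraph.Walk.isPath_of_length_eq_dist
      rw [SimpleGraph.Walk.length_concat, hwl', h]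
    rw [(hT.existsUnique_path p q).unique hw hc, SimpleGraph.Walk.penultimate_concat]
  have hadj : G.Adj q w.penultimate := (w.adj_penultimate hnil).symm
  refine ⟨w.penultimate, hadj, fun r hr => ⟨huniq r hr, ?_⟩⟩
  rintro rfl
  have h1 := SimpleGraph.dist_le w.dropLast
  have h2 := w.length_dropLast_add_one hnil
  rcases hT.dist_eq_dist_add_one_of_adj p hadj with h | h <;> omega

/-- The graph Laplacian of the distance from `p`, away from `p`. -/
lemma sum_neighbor_dist_sub {V : Type*} [Fintype V] {G : SimpleGraph V} [DecidableRel G.Adj]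
    (hT : G.IsTree) {p q : V} (hq : q ≠ p) :
    ∑ r ∈ G.neighborFinset q, ((G.dist p r : ℤ) - G.dist p q) = G.degree q - 2 := by
  classical
  obtain ⟨r₀, h₀, h⟩ := exists_parent hT hq
  have hstep : ∀ r ∈ G.neighborFinset q,
      ((G.dist p r : ℤ) - G.dist p q) = 1 - if r = r₀ then 2 else 0 := by
    intro r hr
    rw [SimpleGraph.mem_neighborFinset] at hr
    have h1 := h r hr
    have h2 := hT.dist_eq_dist_add_one_of_adj p hr
    split_ifs with h3
    · have := h1.2 h3
      omega
    · have : ¬ G.dist p q = G.dist p r + 1 := fun h => h3 (h1.1 h)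
      omega
  rw [Finset.sum_congr rfl hstep, Finset.sum_sub_distrib, Finset.sum_ite_eq',
    if_pos ((G.mem_neighborFinset q r₀).2 h₀)]
  simp

/-- Summation by parts for the graph Laplacian. -/
lemma sum_neighbor_sq {V : Type*} [Fintype V] (G : SimpleGraph V) [DecidableRel G.Adj]
    (f : V → ℤ) :
    ∑ q, ∑ r ∈ G.neighborFinset q, (f r - f q) ^ 2 =
      -2 * ∑ q, f q * ∑ r ∈ G.neighborFinset q, (f r - f q) := by
  have hite (F : V → V → ℤ) : ∑ q, ∑ r ∈ G.neighborFinset q, F q r =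
      ∑ q, ∑ r, if G.Adj q r then F q r else 0 := by
    simp only [SimpleGraph.neighborFinset_eq_filter, Finset.sum_filter]
  have hswap : ∑ q, ∑ r ∈ G.neighborFinset q, f r * (f r - f q) =
      ∑ q, ∑ r ∈ G.neighborFinset q, f q * (f q - f r) := by
    rw [hite, hite, Finset.sum_comm]
    simp only [G.adj_comm]
  have hneg : ∑ q, ∑ r ∈ G.neighborFinset q, f q * (f q - f r) =
      -∑ q, ∑ r ∈ G.neighborFinset q, f q * (f r - f q) := by
    simp only [← Finset.sum_neg_distrib]
    exact Finset.sum_congr rfl fun q _ => Finset.sum_congr rfl fun r _ => by ring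
  have hsplit : ∑ q, ∑ r ∈ G.neighborFinset q, (f r - f q) ^ 2 =
      ∑ q, ∑ r ∈ G.neighborFinset q, f r * (f r - f q) -
        ∑ q, ∑ r ∈ G.neighborFinset q, f q * (f r - f q) := by
    simp only [← Finset.sum_sub_distrib]
    exact Finset.sum_congr rfl fun q _ => Finset.sum_congr rfl fun r _ => by ring
  rw [hsplit, hswap, hneg]
  simp only [← Finset.mul_sum]
  ring

/-- The identity for distances from a single root `p`. -/
lemma two_mul_sum_dist {V : Type*} [Fintype V] {G : SimpleGraph V} [DecidableRel G.Adj]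
    (hT : G.IsTree) (p : V) :
    2 * ∑ q, G.dist p q = (Fintype.card V - 1) + ∑ q, G.degree q * G.dist p q := by
  have hparts := sum_neighbor_sq G (fun q => (G.dist p q : ℤ))
  have hlap : ∀ q, (G.dist p q : ℤ) * ∑ r ∈ G.neighborFinset q, ((G.dist p r : ℤ) - G.dist p q) =
      G.degree q * G.dist p q - 2 * G.dist p q := by
    intro q
    by_cases hq : q = p
    · subst hq; simp
    · rw [sum_neighbor_dist_sub hT hq]; ring
  have hsq : ∀ q, ∑ r ∈ G.neighborFinset q, ((G.dist p r : ℤ) - G.dist p q) ^ 2 = G.degree q := by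
    intro q
    rw [Finset.sum_congr rfl (g := fun _ => 1)]
    · simp
    · intro r hr
      rw [SimpleGraph.mem_neighborFinset] at hr
      rcases hT.dist_eq_dist_add_one_of_adj p hr with h | h <;> rw [h] <;> push_cast <;> ring
  simp only [hlap, hsq] at hparts
  rw [Finset.sum_sub_distrib, ← Finset.mul_sum] at hparts
  have hdeg := G.sum_degrees_eq_twice_card_edges
  have hcard := hT.card_edgeFinset
  zify at hdeg
  rw [hdeg] at hparts
  have hmain : 2 * ∑ q, G.dist p q = G.edgeFinset.card + ∑ q, G.degree q * G.dist p q := by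
    zify
    linarith
  omega

lemma even_sum_dist {V : Type*} [Fintype V] (G : SimpleGraph V) :
    2 ∣ ∑ p : V, ∑ q : V, G.dist p q := by
  classical
  rw [← Fintype.sum_prod_type', ← ZMod.natCast_eq_zero_iff]
  push_cast
  refine Finset.sum_involution (fun x _ => x.swap) ?_ ?_ (by simp) (by simp)
  · intro x _
    rw [Prod.fst_swap, Prod.snd_swap, G.dist_comm (u := x.2)]
    exact CharTwo.add_self_eq_zero _
  · rintro ⟨a, b⟩ _ hne heq
    obtain rfl : b = a := congrArg Prod.fst heq
    simp at hne

/-- For a tree `T` on `v` vertices with each edge of length 1,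
`4 W(T) = v(v-1) + ∑_{p,q} deg(q) · d(p,q)` (ordered pairs). -/
theorem four_mul_wienerIndex_tree {V : Type*} [Fintype V]
    (G : SimpleGraph V) [DecidableRel G.Adj] (hT : G.IsTree) :
    4 * wienerIndex G =
      Fintype.card V * (Fintype.card V - 1) +
        ∑ p : V, ∑ q : V, G.degree q * G.dist p q := by
  have hsum : 2 * ∑ p : V, ∑ q : V, G.dist p q =
      Fintype.card V * (Fintype.card V - 1) + ∑ p : V, ∑ q : V, G.degree q * G.dist p q := by
    rw [Finset.mul_sum, Finset.sum_congr rfl fun p _ => two_mul_sum_dist hT p,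
      Finset.sum_add_distrib]
    simp
  have hdiv := Nat.mul_div_cancel' (even_sum_dist G)
  rw [← hsum, wienerIndex]
  omega
end

section
/- Let T be a tree with v vertices, each edge having length 1. Then the Wiener index of T satisfies W(T) = (v-1)^2 + N, where N is the number of 3-element subsets {e_1, e_2, e_3} of the edge set of T such that the three edges e_1, e_2, e_3 all lie on a common path in T (i.e., there exist vertices u and w such that each of e_1, e_2, e_3 is an edge of the unique path from u to w). -/
namespace WienerTree

open SimpleGraph Finset

variable {V : Type*} {G : SimpleGraph V}

/-- `Spans G s p q`: some path from `p` to `q` contains all edges of `s`, and both `p` and `q` are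
endpoints of edges of `s`; equivalently, for nonempty `s`, the first and last edges of that path
belong to `s`. -/
def Spans (G : SimpleGraph V) (s : Finset (Sym2 V)) (p q : V) : Prop :=
  ∃ P : G.Walk p q, P.IsPath ∧ (∀ e ∈ s, e ∈ P.edges) ∧ (∃ e ∈ s, p ∈ e) ∧ (∃ e ∈ s, q ∈ e)

lemma Spans.symm {s : Finset (Sym2 V)} {p q : V} (h : Spans G s p q) : Spans G s q p := by
  obtain ⟨P, hP, h1, h2, h3⟩ := h
  exact ⟨P.reverse, hP.reverse, by simpa using h1, h3, h2⟩

lemma path_eq (hT : G.IsTree) {p q : V} {P Q : G.Walk p q} (hP : P.IsPath) (hQ : Q.IsPath) :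
    P = Q :=
  (hT.existsUnique_path p q).unique hP hQ

lemma length_eq_dist (hT : G.IsTree) {p q : V} {P : G.Walk p q} (hP : P.IsPath) :
    P.length = G.dist p q := by
  obtain ⟨Q, hQ, hl⟩ := hT.connected.exists_path_of_dist p q
  rw [path_eq hT hP hQ, hl]

lemma mem_support_of_mem_edge {p q x : V} {P : G.Walk p q} {e : Sym2 V} (he : e ∈ P.edges)
    (hx : x ∈ e) : x ∈ P.support := by
  obtain ⟨y, rfl⟩ := hx
  exact P.fst_mem_support_of_mem_edges he

lemma dist_add_dist (hT : G.IsTree) {p q x : V} {P : G.Walk p q} (hP : P.IsPath)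
    (hx : x ∈ P.support) : G.dist p x + G.dist x q = G.dist p q := by
  classical
  rw [← length_eq_dist hT hP, ← length_eq_dist hT (hP.takeUntil hx),
    ← length_eq_dist hT (hP.dropUntil hx), ← Walk.length_append, Walk.take_spec]

/-- Two vertices of a path occur on it in one of the two orders. -/
lemma dist_between (hT : G.IsTree) {p q x y : V} {P : G.Walk p q} (hP : P.IsPath)
    (hx : x ∈ P.support) (hy : y ∈ P.support) :
    G.dist p y + G.dist y x = G.dist p x ∨ G.dist x y + G.dist y q = G.dist x q := by
  classical
  rw [← P.take_spec hx, Walk.mem_support_append_iff] at hy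
  exact hy.imp (dist_add_dist hT (hP.takeUntil hx)) (dist_add_dist hT (hP.dropUntil hx))

lemma Spans.unique (hT : G.IsTree) {s : Finset (Sym2 V)} {p q p' q' : V}
    (h : Spans G s p q) (h' : Spans G s p' q') : (p' = p ∧ q' = q) ∨ (p' = q ∧ q' = p) := by
  obtain ⟨P, hP, h1, ⟨a, ha, hpa⟩, ⟨b, hb, hqb⟩⟩ := h
  obtain ⟨P', hP', h1', ⟨a', ha', hpa'⟩, ⟨b', hb', hqb'⟩⟩ := h'
  have hp := mem_support_of_mem_edge (h1' a ha) hpa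
  have hq := mem_support_of_mem_edge (h1' b hb) hqb
  have hp' := mem_support_of_mem_edge (h1 a' ha') hpa'
  have hq' := mem_support_of_mem_edge (h1 b' hb') hqb'
  have e1 := dist_add_dist hT hP hp'
  have e2 := dist_add_dist hT hP hq'
  have e3 := dist_add_dist hT hP' hp
  have e4 := dist_add_dist hT hP' hq
  have e5 := dist_between hT hP hp' hq'
  have c1 := G.dist_comm (u := p) (v := p')
  have c2 := G.dist_comm (u := p) (v := q')
  have c3 := G.dist_comm (u := q) (v := p')
  have c4 := G.dist_comm (u := q) (v := q')
  have c5 := G.dist_comm (u := p') (v := q')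
  have key : (G.dist p' p = 0 ∧ G.dist q' q = 0) ∨ (G.dist p' q = 0 ∧ G.dist q' p = 0) := by
    omega
  simpa only [hT.connected.dist_eq_zero_iff] using key

/-- A path containing a nonempty set `s` of edges can be shortened at its start until it starts
with an edge of `s`. -/
lemma exists_trim {s : Finset (Sym2 V)} (hs : s.Nonempty) {u w : V} (P : G.Walk u w)
    (hP : P.IsPath) (h : ∀ e ∈ s, e ∈ P.edges) :
    ∃ (u' : V) (Q : G.Walk u' w), Q.IsPath ∧ (∀ e ∈ s, e ∈ Q.edges) ∧ ∃ e ∈ s, u' ∈ e := by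
  induction P with
  | nil =>
    obtain ⟨e, he⟩ := hs
    simpa using h e he
  | @cons u v w hadj M ih =>
    by_cases hf : s(u, v) ∈ s
    · exact ⟨u, .cons hadj M, hP, h, _, hf, by simp⟩
    · refine ih hP.of_cons fun e he => ?_
      have := h e he
      rw [Walk.edges_cons, List.mem_cons] at this
      exact this.resolve_left fun h => hf (h ▸ he)

lemma exists_spans {s : Finset (Sym2 V)} (hs : s.Nonempty) {u w : V} (P : G.Walk u w)
    (hP : P.IsPath) (h : ∀ e ∈ s, e ∈ P.edges) : ∃ p q, Spans G s p q := by
  obtain ⟨p, Q, hQ, h1, h2⟩ := exists_trim hs P hP h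
  obtain ⟨q, R, hR, h3, h4⟩ := exists_trim hs Q.reverse hQ.reverse (by simpa using h1)
  exact ⟨q, p, R, hR, h3, h4, h2⟩

lemma exists_start_edge {p q : V} (P : G.Walk p q) (hP : P.IsPath) (hl : 1 ≤ P.length) :
    ∃ f ∈ P.edges, ∀ e ∈ P.edges, p ∈ e ↔ e = f := by
  cases P with
  | nil => simp at hl
  | @cons _ v _ hadj M =>
    refine ⟨s(p, v), by simp, fun e he => ⟨fun hpe => ?_, ?_⟩⟩
    · rw [Walk.edges_cons, List.mem_cons] at he
      refine he.resolve_right fun h => ?_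
      exact ((Walk.cons_isPath_iff hadj M).1 hP).2 (mem_support_of_mem_edge h hpe)
    · rintro rfl
      simp

/-- There are `#E - 2` three-element subsets of `E` containing two given elements of `E`. -/
lemma card_triples {α : Type*} [DecidableEq α] [Fintype α] (E : Finset α) {f g : α} (hf : f ∈ E)
    (hg : g ∈ E) (hfg : f ≠ g) :
    #{s : Finset α | #s = 3 ∧ s ⊆ E ∧ f ∈ s ∧ g ∈ s} = #E - 2 := by
  have hE : #(E \ {f, g}) = #E - 2 := by
    rw [card_sdiff_of_subset (by simp [insert_subset_iff, hf, hg]), card_pair hfg]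
  rw [← hE]
  symm
  refine card_bij (fun m _ => {f, g, m}) ?_ ?_ ?_
  · intro m hm
    simp only [mem_sdiff, mem_insert, mem_singleton, not_or] at hm
    simp only [mem_filter, mem_univ, true_and]
    refine ⟨card_eq_three.2 ⟨f, g, m, hfg, Ne.symm hm.2.1, Ne.symm hm.2.2, rfl⟩, ?_, by simp,
      by simp⟩
    simp [insert_subset_iff, hf, hg, hm.1]
  · intro m hm m' hm' h
    simp only [mem_sdiff, mem_insert, mem_singleton, not_or] at hm hm'
    have : m ∈ ({f, g, m'} : Finset α) := h ▸ (by simp)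
    simpa [hm.2.1, hm.2.2] using this
  · intro s hs
    simp only [mem_filter, mem_univ, true_and] at hs
    obtain ⟨h3, hsE, hfs, hgs⟩ := hs
    have h1 : #(s \ {f, g}) = 1 := by
      rw [card_sdiff_of_subset (by simp [insert_subset_iff, hfs, hgs]), card_pair hfg, h3]
    obtain ⟨m, hm⟩ := card_eq_one.1 h1
    have hm' : m ∈ s \ {f, g} := by simp [hm]
    refine ⟨m, sdiff_subset_sdiff hsE le_rfl hm', ?_⟩
    have := sdiff_union_of_subset (show ({f, g} : Finset α) ⊆ s by
      simp [insert_subset_iff, hfs, hgs])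
    rw [← this, hm]
    ext x
    simp only [mem_insert, mem_singleton, mem_union]
    tauto

open Classical in
lemma card_spans [Fintype V] (hT : G.IsTree) (p q : V) :
    #{s : Finset (Sym2 V) | #s = 3 ∧ Spans G s p q} = G.dist p q - 2 := by
  obtain ⟨P, hP, -⟩ := hT.existsUnique_path p q
  have hd := length_eq_dist hT hP
  have hcard : #P.edges.toFinset = G.dist p q := by
    rw [List.toFinset_card_of_nodup hP.edges_nodup, Walk.length_edges, hd]
  by_cases h2 : 2 ≤ G.dist p q
  · obtain ⟨f, hf, hf'⟩ := exists_start_edge P hP (by omega)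
    obtain ⟨g, hg, hg'⟩ := exists_start_edge P.reverse hP.reverse (by simp; omega)
    simp only [Walk.edges_reverse, List.mem_reverse] at hg hg'
    have hfg : f ≠ g := by
      rintro rfl
      have hpq : p ≠ q := by
        rintro rfl
        simp at h2
      -- an edge containing both ends would be the edge `pq`, so `d(p,q) = 1`
      have := (Sym2.mem_and_mem_iff hpq).1 ⟨(hf' f hf).2 rfl, (hg' f hg).2 rfl⟩
      have hadj : G.Adj p q := P.adj_of_mem_edges (this ▸ hf)
      rw [dist_eq_one_iff_adj.2 hadj] at h2
      omega
    rw [← hcard, ← card_triples P.edges.toFinset (List.mem_toFinset.2 hf)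
      (List.mem_toFinset.2 hg) hfg]
    congr 1
    refine filter_congr fun s _ => and_congr_right fun _ => ⟨?_, ?_⟩
    · rintro ⟨Q, hQ, h1, ⟨a, ha, hpa⟩, ⟨b, hb, hqb⟩⟩
      obtain rfl := path_eq hT hP hQ
      refine ⟨fun e he => List.mem_toFinset.2 (h1 e he), ?_, ?_⟩
      · rwa [← (hf' a (h1 a ha)).1 hpa]
      · rwa [← (hg' b (h1 b hb)).1 hqb]
    · rintro ⟨h1, hfs, hgs⟩
      exact ⟨P, hP, fun e he => List.mem_toFinset.1 (h1 he), ⟨f, hfs, (hf' f hf).2 rfl⟩,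
        ⟨g, hgs, (hg' g hg).2 rfl⟩⟩
  · rw [Nat.sub_eq_zero_of_le (by omega), card_eq_zero, filter_eq_empty_iff]
    rintro s - ⟨h3, Q, hQ, h1, -⟩
    obtain rfl := path_eq hT hP hQ
    have := card_le_card (fun e he => List.mem_toFinset.2 (h1 e he) : s ⊆ P.edges.toFinset)
    omega

open Classical in
/-- Each triple lying on a common path is spanned by exactly two ordered pairs. -/
lemma card_pairs [Fintype V] (hT : G.IsTree) {s : Finset (Sym2 V)} (h3 : #s = 3)
    (hs : ∃ (u w : V) (P : G.Walk u w), P.IsPath ∧ ∀ e ∈ s, e ∈ P.edges) :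
    #{x : V × V | Spans G s x.1 x.2} = 2 := by
  obtain ⟨u, w, P, hP, h⟩ := hs
  obtain ⟨p, q, hpq⟩ := exists_spans (card_pos.1 (by omega)) P hP h
  have hne : p ≠ q := by
    rintro rfl
    have : 0 < #{s : Finset (Sym2 V) | #s = 3 ∧ Spans G s p p} :=
      card_pos.2 ⟨s, by simp [h3, hpq]⟩
    rw [card_spans hT] at this
    simp at this
  have : ({x : V × V | Spans G s x.1 x.2} : Finset (V × V)) = {(p, q), (q, p)} := by
    ext ⟨x, y⟩
    simp only [mem_filter, mem_univ, true_and, mem_insert, mem_singleton, Prod.mk.injEq]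
    refine ⟨hpq.unique hT, ?_⟩
    rintro (⟨rfl, rfl⟩ | ⟨rfl, rfl⟩)
    · exact hpq
    · exact hpq.symm
  rw [this, card_pair (by simp [hne])]

open Classical in
lemma sum_dist_sub_two [Fintype V] (hT : G.IsTree) :
    ∑ p : V, ∑ q : V, (G.dist p q - 2) =
      2 * #{s : Finset (Sym2 V) | (∀ e ∈ s, e ∈ G.edgeSet) ∧ #s = 3 ∧
          ∃ (u w : V) (P : G.Walk u w), P.IsPath ∧ ∀ e ∈ s, e ∈ P.edges} := by
  set T : Finset (Finset (Sym2 V)) := {s : Finset (Sym2 V) | (∀ e ∈ s, e ∈ G.edgeSet) ∧ #s = 3 ∧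
          ∃ (u w : V) (P : G.Walk u w), P.IsPath ∧ ∀ e ∈ s, e ∈ P.edges} with hTdef
  have hdc := sum_card_bipartiteAbove_eq_sum_card_bipartiteBelow (s := (univ : Finset (V × V)))
    (t := T) (fun x s => Spans G s x.1 x.2)
  have hl : ∀ x : V × V, #(bipartiteAbove (fun x s => Spans G s x.1 x.2) T x) =
      G.dist x.1 x.2 - 2 := by
    intro x
    rw [← card_spans hT, bipartiteAbove, hTdef, filter_filter]
    congr 1
    refine filter_congr fun s _ => ⟨fun h => ⟨h.1.2.1, h.2⟩, fun h => ⟨⟨?_, h.1, ?_⟩, h.2⟩⟩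
    · obtain ⟨-, P, -, h1, -⟩ := h
      exact fun e he => P.edges_subset_edgeSet (h1 e he)
    · obtain ⟨-, P, hP, h1, -⟩ := h
      exact ⟨_, _, P, hP, h1⟩
  have hr : ∀ s ∈ T, #(bipartiteBelow (fun x s => Spans G s x.1 x.2)
      (univ : Finset (V × V)) s) = 2 := by
    intro s hs
    rw [hTdef, mem_filter] at hs
    exact card_pairs hT hs.2.2.1 hs.2.2.2
  rw [sum_congr rfl fun x _ => hl x, sum_congr rfl hr, Fintype.sum_prod_type] at hdc
  rw [hdc, sum_const, smul_eq_mul, mul_comm]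

open Classical in
lemma sum_dist_add [Fintype V] (hT : G.IsTree) :
    ∑ p : V, ∑ q : V, G.dist p q + 2 * (Fintype.card V - 1) =
      ∑ p : V, ∑ q : V, (G.dist p q - 2) + 2 * (Fintype.card V * (Fintype.card V - 1)) := by
  have hpt : ∀ p q : V, G.dist p q + (if G.Adj p q then 1 else 0) =
      (G.dist p q - 2) + 2 * (if q ≠ p then 1 else 0) := by
    intro p q
    have h0 := hT.connected.dist_eq_zero_iff (u := p) (v := q)
    have h1 := dist_eq_one_iff_adj (G := G) (u := p) (v := q)
    rw [eq_comm (a := p)] at h0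
    simp only [← h1, ne_eq, ← h0]
    split_ifs <;> omega
  have hsum := sum_congr (rfl : (univ : Finset V) = univ) fun p _ =>
    sum_congr (rfl : (univ : Finset V) = univ) fun q _ => hpt p q
  simp only [sum_add_distrib, ← mul_sum] at hsum
  have hadj : ∑ p : V, ∑ q : V, (if G.Adj p q then 1 else 0) = 2 * (Fintype.card V - 1) := by
    rw [← hT.card_edgeFinset, Nat.add_sub_cancel, ← G.sum_degrees_eq_twice_card_edges]
    refine sum_congr rfl fun p _ => ?_
    rw [← card_filter, ← card_neighborFinset_eq_degree, neighborFinset_eq_filter]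
  have hne : ∑ p : V, ∑ q : V, (if q ≠ p then 1 else 0) =
      Fintype.card V * (Fintype.card V - 1) := by
    simp_rw [← card_filter, filter_ne', card_erase_of_mem (mem_univ _), sum_const, card_univ,
      smul_eq_mul]
  rw [hadj, hne] at hsum
  exact hsum

end WienerTree

/-- For a tree `T` on `v` vertices with each edge of length 1,
`W(T) = (v-1)² + N`, where `N` is the number of 3-element subsets of the edge set of `T`
whose three edges all lie on a common path in `T`. -/
theorem wienerIndex_tree_eq_sq_add_card_path_triples {V : Type*} [Fintype V]
    (G : SimpleGraph V) (hT : G.IsTree) :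
    wienerIndex G = (Fintype.card V - 1) ^ 2 +
      Nat.card {s : Finset (Sym2 V) //
        (∀ e ∈ s, e ∈ G.edgeSet) ∧ s.card = 3 ∧
          ∃ (u w : V) (p : G.Walk u w), p.IsPath ∧ ∀ e ∈ s, e ∈ p.edges} := by
  classical
  have h1 := WienerTree.sum_dist_sub_two hT
  have h2 := WienerTree.sum_dist_add hT
  rw [Nat.card_eq_fintype_card, Fintype.card_subtype, wienerIndex]
  rw [h1] at h2
  have := hT.connected.nonempty
  obtain ⟨n, hn⟩ : ∃ n, Fintype.card V = n + 1 := ⟨_, (Nat.sub_add_cancel Fintype.card_pos).symm⟩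
  rw [hn, Nat.add_sub_cancel] at h2 ⊢
  rw [show (n + 1) * n = n ^ 2 + n by ring] at h2
  omega
end

section
/- Let T be any tree with v vertices, each edge having length 1. Then the Wiener index of T satisfies (v-1)^2 \le W(T) \le v(v^2-1)/6; that is, among all trees on v vertices the star graph minimizes and the path graph maximizes the Wiener index. -/
/-- In a connected graph, at least `d(x, q)` vertices are strictly closer to `x` than `q` is:
a geodesic from `x` to `q` supplies one at each distance below `d(x, q)`. -/
lemma dist_le_card_closer {V : Type*} [Fintype V] {G : SimpleGraph V} (hG : G.Connected)
    (x q : V) : G.dist x q ≤ (Finset.univ.filter fun p => G.dist x p < G.dist x q).card := by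
  classical
  obtain ⟨w, hw⟩ := hG.exists_walk_length_eq_dist x q
  have hsub : Finset.range (G.dist x q) ⊆
      (Finset.univ.filter fun p => G.dist x p < G.dist x q).image (G.dist x) := by
    intro k hk
    rw [Finset.mem_range] at hk
    have hd : G.dist x (w.getVert k) = k := by
      have h1 := G.dist_le (w.take k)
      have h2 := G.dist_le (w.drop k)
      have h3 := hG.dist_triangle (u := x) (v := w.getVert k) (w := q)
      rw [SimpleGraph.Walk.take_length] at h1
      rw [SimpleGraph.Walk.drop_length] at h2
      omega
    exact Finset.mem_image.2 ⟨w.getVert k, by simp [hd, hk], hd⟩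
  simpa using (Finset.card_le_card hsub).trans Finset.card_image_le

/-- The distances from a fixed vertex of a connected graph on `n` vertices sum to at most
`n (n - 1) / 2`. -/
lemma two_mul_sum_dist_add_card_le {V : Type*} [Fintype V] {G : SimpleGraph V}
    (hG : G.Connected) (x : V) :
    2 * ∑ q, G.dist x q + Fintype.card V ≤ Fintype.card V ^ 2 := by
  classical
  have h1 : ∑ q, G.dist x q ≤ ∑ q, ∑ p, if G.dist x p < G.dist x q then 1 else 0 := by
    refine Finset.sum_le_sum fun q _ => ?_
    rw [← Finset.card_filter]
    exact dist_le_card_closer hG x q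
  have h2 := h1
  rw [Finset.sum_comm] at h2
  have h3 : ∑ q : V, ∑ p : V, ((if G.dist x p < G.dist x q then 1 else 0)
      + (if G.dist x q < G.dist x p then 1 else 0) + (if q = p then 1 else 0))
      ≤ ∑ _q : V, ∑ _p : V, 1 := by
    refine Finset.sum_le_sum fun q _ => Finset.sum_le_sum fun p _ => ?_
    by_cases h : q = p
    · simp [h]
    · split_ifs <;> omega
  simp only [Finset.sum_add_distrib] at h3
  simp only [Finset.sum_ite_eq, Finset.mem_univ, if_true, Finset.sum_const, Finset.card_univ,
    smul_eq_mul, mul_one] at h3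
  rw [sq]
  omega

/-- The distances over all ordered pairs of vertices of a connected graph on `n` vertices sum to
at most `n (n ^ 2 - 1) / 3`. -/
lemma three_mul_sum_dist_add_card_le (n : ℕ) :
    ∀ {V : Type*} [Fintype V] (G : SimpleGraph V), G.Connected → Fintype.card V = n →
      3 * ∑ p, ∑ q, G.dist p q + n ≤ n ^ 3 := by
  classical
  induction n with
  | zero =>
    intro V _ G hG h
    have := hG.nonempty
    exact absurd h Fintype.card_ne_zero
  | succ n ih =>
    intro V _ G hG h
    rcases subsingleton_or_nontrivial V with hs | hs
    · have h0 : ∑ p, ∑ q, G.dist p q = 0 := by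
        refine Finset.sum_eq_zero fun p _ => Finset.sum_eq_zero fun q _ => ?_
        rw [Subsingleton.elim p q, SimpleGraph.dist_self]
      rw [h0]
      simpa using Nat.le_self_pow (by norm_num : 3 ≠ 0) (n + 1)
    · obtain ⟨x, hx⟩ := hG.exists_connected_induce_compl_singleton_of_finite_nontrivial
      have hc : Fintype.card ({x}ᶜ : Set V) = n := by
        rw [Fintype.card_compl_set]; simp [h]
      have hI := ih (G.induce {x}ᶜ) hx hc
      have hD := two_mul_sum_dist_add_card_le hG x
      rw [h] at hD
      have hle : ∀ p q : ({x}ᶜ : Set V), G.dist p q ≤ (G.induce {x}ᶜ).dist p q := by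
        intro p q
        obtain ⟨w, hw⟩ := hx.exists_walk_length_eq_dist p q
        rw [← hw, ← SimpleGraph.Walk.length_map (SimpleGraph.Embedding.induce _).toHom w]
        exact G.dist_le _
      have hsplit : ∀ f : V → ℕ, ∑ p, f p = f x + ∑ p : ({x}ᶜ : Set V), f p := by
        intro f
        rw [Fintype.sum_eq_add_sum_compl x]
        congr 1
        exact Finset.sum_subtype _ (by simp) f
      have hS : ∑ p, ∑ q, G.dist p q = 2 * ∑ q, G.dist x q
          + ∑ p : ({x}ᶜ : Set V), ∑ q : ({x}ᶜ : Set V), G.dist p q := by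
        have e : ∑ p : ({x}ᶜ : Set V), G.dist p x = ∑ q, G.dist x q := by
          rw [hsplit fun q => G.dist x q, SimpleGraph.dist_self, zero_add]
          exact Finset.sum_congr rfl fun p _ => G.dist_comm
        rw [hsplit fun p => ∑ q, G.dist p q]
        simp_rw [fun p : ({x}ᶜ : Set V) => hsplit fun q => G.dist p q]
        rw [Finset.sum_add_distrib, e]
        ring
      have hT : ∑ p : ({x}ᶜ : Set V), ∑ q : ({x}ᶜ : Set V), G.dist p q
          ≤ ∑ p, ∑ q, (G.induce {x}ᶜ).dist p q :=
        Finset.sum_le_sum fun p _ => Finset.sum_le_sum fun q _ => hle p q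
      rw [hS]
      nlinarith

/-- The distances over all ordered pairs of vertices of a tree on `n` vertices sum to at least
`2 (n - 1) ^ 2`. -/
lemma two_mul_sq_le_sum_dist {V : Type*} [Fintype V] {G : SimpleGraph V} (hT : G.IsTree) :
    2 * (Fintype.card V - 1) ^ 2 ≤ ∑ p, ∑ q, G.dist p q := by
  classical
  have h1 : ∑ _p : V, ∑ _q : V, 2 ≤ ∑ p : V, ∑ q : V, (G.dist p q
      + (if G.Adj p q then 1 else 0) + (if p = q then 2 else 0)) := by
    refine Finset.sum_le_sum fun p _ => Finset.sum_le_sum fun q _ => ?_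
    by_cases h : p = q
    · simp [h]
    · by_cases ha : G.Adj p q
      · simp [ha, SimpleGraph.dist_eq_one_iff_adj.2 ha]
      · have := hT.connected.one_lt_dist_of_ne_of_not_adj h ha
        omega
  have h2 : ∑ p : V, ∑ q : V, (if G.Adj p q then 1 else 0) = 2 * G.edgeFinset.card := by
    rw [← G.sum_degrees_eq_twice_card_edges]
    refine Finset.sum_congr rfl fun p _ => ?_
    rw [← Finset.card_filter, ← G.card_neighborFinset_eq_degree, G.neighborFinset_eq_filter]
  have h3 := hT.card_edgeFinset
  simp only [Finset.sum_add_distrib] at h1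
  rw [h2] at h1
  simp only [Finset.sum_ite_eq, Finset.mem_univ, if_true, Finset.sum_const, Finset.card_univ,
    smul_eq_mul] at h1
  rw [← h3] at h1 ⊢
  simp only [Nat.add_sub_cancel]
  nlinarith

/-- For any tree `T` on `v` vertices with each edge of length 1,
`(v-1)² ≤ W(T) ≤ v(v²-1)/6`: the star minimizes and the path maximizes the Wiener index. -/
theorem wienerIndex_tree_bounds {V : Type*} [Fintype V]
    (G : SimpleGraph V) (hT : G.IsTree) :
    (Fintype.card V - 1) ^ 2 ≤ wienerIndex G ∧
      wienerIndex G ≤ Fintype.card V * (Fintype.card V ^ 2 - 1) / 6 := by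
  have hl := two_mul_sq_le_sum_dist hT
  have hu := three_mul_sum_dist_add_card_le _ G hT.connected rfl
  have e : Fintype.card V * (Fintype.card V ^ 2 - 1) = Fintype.card V ^ 3 - Fintype.card V := by
    rw [Nat.mul_sub, mul_one]
    congr 1
    ring
  rw [e]
  unfold wienerIndex
  omega
end

section
/- Let T be a tree with v vertices, each edge having length 1. For each vertex p of T, let n_1(p), n_2(p), \dots, n_{\deg(p)}(p) be the numbers of vertices in the connected components of the graph obtained from T by deleting the vertex p (equivalently, deleting all edges incident to p and the vertex p itself). Then the Wiener index of T satisfies W(T) = v(v^2-1)/6 - \sum_{p \in V(T),\ \deg(p) \ge 3} \; \sum_{1 \le i < j < k \le \deg(p)} n_i(p)\, n_j(p)\, n_k(p). -/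
/-- The number of vertices of the connected component containing the vertex `u` of the
graph obtained from `G` by deleting the vertex `p`: a vertex `x` lies in this component
iff there is a walk from `u` to `x` avoiding `p`. -/
noncomputable def compCardAvoiding {V : Type*} (G : SimpleGraph V) (p u : V) : ℕ :=
  Nat.card {x : V | ∃ w : G.Walk u x, p ∉ w.support}

namespace DoyleGraver

open Finset

/-! ### Separation and medians in trees -/

section Tree

variable {V : Type*} {G : SimpleGraph V}

lemma path_eq (hT : G.IsTree) {x y : V} {w w' : G.Walk x y} (hw : w.IsPath)
    (hw' : w'.IsPath) : w = w' :=
  have := hT.isAcyclic.subsingleton_path x y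
  congrArg Subtype.val (Subsingleton.elim (α := G.Path x y) ⟨w, hw⟩ ⟨w', hw'⟩ :)

/-- In a tree every path is a geodesic. -/
lemma length_eq_dist (hT : G.IsTree) {x y : V} {w : G.Walk x y} (hw : w.IsPath) :
    w.length = G.dist x y := by
  obtain ⟨w', hw', h⟩ := hT.connected.exists_path_of_dist x y
  rwa [← path_eq hT hw hw'] at h

/-- `u` and `x` are joined by a walk avoiding `p`. -/
def Joined (G : SimpleGraph V) (p u x : V) : Prop := ∃ w : G.Walk u x, p ∉ w.support

lemma Joined.symm {p x y : V} (h : Joined G p x y) : Joined G p y x := by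
  obtain ⟨w, hw⟩ := h
  exact ⟨w.reverse, by simpa using hw⟩

lemma Joined.trans {p x y z : V} (h : Joined G p x y) (h' : Joined G p y z) :
    Joined G p x z := by
  obtain ⟨w, hw⟩ := h
  obtain ⟨w', hw'⟩ := h'
  exact ⟨w.append w', by simp [SimpleGraph.Walk.mem_support_append_iff, hw, hw']⟩

lemma Joined.exists_path {p u x : V} (h : Joined G p u x) :
    ∃ w : G.Walk u x, w.IsPath ∧ p ∉ w.support := by
  classical
  obtain ⟨w, hw⟩ := h
  exact ⟨w.bypass, w.bypass_isPath, fun hp => hw (w.support_bypass_subset_support hp)⟩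

lemma Joined.dist_eq (hT : G.IsTree) {p u x : V} (hu : G.Adj p u) (h : Joined G p u x) :
    G.dist p x = G.dist u x + 1 := by
  obtain ⟨w, hw, hp⟩ := h.exists_path
  rw [← length_eq_dist hT hw, ← length_eq_dist hT (hw.cons hp (h := hu))]
  simp

lemma Joined.unique (hT : G.IsTree) {p u u' x : V} (hu : G.Adj p u) (hu' : G.Adj p u')
    (h : Joined G p u x) (h' : Joined G p u' x) : u = u' := by
  obtain ⟨w, hw, hp⟩ := h.exists_path
  obtain ⟨w', hw', hp'⟩ := h'.exists_path
  have key := path_eq hT (hw.cons hp (h := hu)) (hw'.cons hp' (h := hu'))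
  have := congrArg SimpleGraph.Walk.snd key
  simpa using this

lemma exists_branch (hT : G.IsTree) (p x : V) :
    ∃ u, (x = p ∧ u = p) ∨ (x ≠ p ∧ G.Adj p u ∧ Joined G p u x) := by
  by_cases hx : x = p
  · exact ⟨p, Or.inl ⟨hx, rfl⟩⟩
  · obtain ⟨w, hw, -⟩ := hT.connected.exists_path_of_dist p x
    cases w with
    | nil => exact absurd rfl hx
    | @cons _ u _ h w =>
      rw [SimpleGraph.Walk.cons_isPath_iff] at hw
      exact ⟨u, Or.inr ⟨hx, h, w, hw.2⟩⟩

/-- The neighbour of `p` lying in the component of `x` after deletion of `p`; the value at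
`x = p` is `p`. -/
noncomputable def branch (hT : G.IsTree) (p x : V) : V := (exists_branch hT p x).choose

lemma branch_spec (hT : G.IsTree) (p x : V) :
    (x = p ∧ branch hT p x = p) ∨
      (x ≠ p ∧ G.Adj p (branch hT p x) ∧ Joined G p (branch hT p x) x) :=
  (exists_branch hT p x).choose_spec

lemma branch_eq_self_iff (hT : G.IsTree) (p x : V) : branch hT p x = p ↔ x = p := by
  rcases branch_spec hT p x with h | h
  · exact iff_of_true h.2 h.1
  · exact ⟨fun e => absurd e h.2.1.ne', fun e => absurd e h.1⟩

lemma joined_iff (hT : G.IsTree) {p u : V} (hu : G.Adj p u) (x : V) :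
    Joined G p u x ↔ branch hT p x = u := by
  rcases branch_spec hT p x with ⟨rfl, h⟩ | h
  · rw [h]
    refine ⟨fun ⟨w, hw⟩ => absurd w.end_mem_support hw, fun e => absurd e hu.ne⟩
  · exact ⟨fun h' => Joined.unique hT h.2.1 hu h.2.2 h', fun e => e ▸ h.2.2⟩

/-- `x` and `y` lie in a common component after deletion of `p`. -/
def Same (hT : G.IsTree) (p x y : V) : Prop := x ≠ p ∧ branch hT p x = branch hT p y

lemma Same.symm {hT : G.IsTree} {p x y : V} (h : Same hT p x y) : Same hT p y x := by
  refine ⟨fun e => h.1 ?_, h.2.symm⟩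
  rwa [← branch_eq_self_iff hT, h.2, branch_eq_self_iff hT]

lemma Same.trans {hT : G.IsTree} {p x y z : V} (h : Same hT p x y) (h' : Same hT p y z) :
    Same hT p x z := ⟨h.1, h.2.trans h'.2⟩

lemma same_iff_joined (hT : G.IsTree) (p x y : V) : Same hT p x y ↔ Joined G p x y := by
  constructor
  · intro h
    have hx := (branch_spec hT p x).resolve_left fun e => h.1 e.1
    have hy := (branch_spec hT p y).resolve_left fun e => h.symm.1 e.1
    rw [← h.2] at hy
    exact hx.2.2.symm.trans hy.2.2
  · intro h
    have hxp : x ≠ p := by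
      rintro rfl
      obtain ⟨w, hw⟩ := h
      exact hw w.start_mem_support
    have hx := (branch_spec hT p x).resolve_left fun e => hxp e.1
    exact ⟨hxp, ((joined_iff hT hx.2.1 y).1 (hx.2.2.trans h)).symm⟩

/-- If `x` and `y` share a component after deletion of `p`, then some neighbour of `p` is closer
to both. -/
lemma Same.exists_closer {hT : G.IsTree} {p x y : V} (h : Same hT p x y) :
    ∃ u, G.Adj p u ∧ G.dist p x = G.dist u x + 1 ∧ G.dist p y = G.dist u y + 1 := by
  have hx := (branch_spec hT p x).resolve_left fun e => h.1 e.1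
  have hy := (branch_spec hT p y).resolve_left fun e => h.symm.1 e.1
  rw [← h.2] at hy
  exact ⟨_, hx.2.1, hx.2.2.dist_eq hT hx.2.1, hy.2.2.dist_eq hT hx.2.1⟩

lemma not_same_of_mem {hT : G.IsTree} {p x y : V} {w : G.Walk x y} (hw : w.IsPath)
    (hp : p ∈ w.support) : ¬ Same hT p x y := by
  rw [same_iff_joined]
  intro h
  obtain ⟨w', hw', hp'⟩ := h.exists_path
  rw [path_eq hT hw hw'] at hp
  exact hp' hp

lemma not_same_iff_mem {hT : G.IsTree} {p x y : V} {w : G.Walk x y} (hw : w.IsPath) :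
    ¬ Same hT p x y ↔ p ∈ w.support := by
  refine ⟨fun h => ?_, not_same_of_mem hw⟩
  by_contra hp
  exact h ((same_iff_joined hT p x y).2 ⟨w, hp⟩)

lemma dist_add_of_not_same {hT : G.IsTree} {p x y : V} (h : ¬ Same hT p x y) :
    G.dist x p + G.dist p y = G.dist x y := by
  classical
  obtain ⟨w, hw, hl⟩ := hT.connected.exists_path_of_dist x y
  have hp := (not_same_iff_mem hw).1 h
  have h1 := congrArg SimpleGraph.Walk.length (w.take_spec hp)
  rw [SimpleGraph.Walk.length_append] at h1
  have h2 := SimpleGraph.dist_le (w.takeUntil p hp)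
  have h3 := SimpleGraph.dist_le (w.dropUntil p hp)
  have h4 := hT.connected.dist_triangle (u := x) (v := p) (w := y)
  omega

/-- `m` separates each two of `x`, `y`, `z`. -/
def IsMedian (hT : G.IsTree) (x y z m : V) : Prop :=
  ¬ Same hT m x y ∧ ¬ Same hT m y z ∧ ¬ Same hT m x z

/-- A vertex minimizing the sum of the distances to `x`, `y` and `z` is a median: if two of the
three points shared a component, then stepping towards it would decrease the sum. -/
lemma exists_median [Fintype V] (hT : G.IsTree) (x y z : V) : ∃ m, IsMedian hT x y z m := by
  obtain ⟨m, -, hm⟩ := Finset.exists_min_image (univ : Finset V)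
    (fun m => G.dist m x + G.dist m y + G.dist m z) ⟨x, mem_univ x⟩
  have step : ∀ u t, G.Adj m u → G.dist u t ≤ G.dist m t + 1 := by
    intro u t h
    have h1 := hT.connected.dist_triangle (u := u) (v := m) (w := t)
    have h2 := SimpleGraph.dist_eq_one_iff_adj.2 h.symm
    omega
  refine ⟨m, ?_, ?_, ?_⟩ <;> intro h <;> obtain ⟨u, hu, h1, h2⟩ := h.exists_closer
  · have h3 := step u z hu
    have h4 := hm u (mem_univ u)
    omega
  · have h3 := step u x hu
    have h4 := hm u (mem_univ u)
    omega
  · have h3 := step u y hu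
    have h4 := hm u (mem_univ u)
    omega

lemma median_unique_aux {hT : G.IsTree} {m m' x y : V} (h' : ¬ Same hT m' x y)
    (hx : ¬ Same hT m x m') (hy : ¬ Same hT m y m') : m = m' := by
  have e1 := dist_add_of_not_same h'
  have e2 := dist_add_of_not_same hx
  have e3 := dist_add_of_not_same hy
  have e4 := hT.connected.dist_triangle (u := x) (v := m) (w := y)
  rw [SimpleGraph.dist_comm (u := m') (v := y)] at e1
  rw [SimpleGraph.dist_comm (u := m) (v := y)] at e4
  exact hT.connected.dist_eq_zero_iff.1 (by omega)

/-- At most one of `x`, `y`, `z` is in the component of `m'` after deletion of `m`, so the path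
to `m'` from each of the other two passes through `m`. -/
lemma median_unique {hT : G.IsTree} {x y z m m' : V} (h : IsMedian hT x y z m)
    (h' : IsMedian hT x y z m') : m = m' := by
  obtain ⟨a, b, c⟩ := h
  obtain ⟨a', b', c'⟩ := h'
  by_cases hx : Same hT m x m'
  · exact median_unique_aux b' (fun e => a (hx.trans e.symm)) (fun e => c (hx.trans e.symm))
  · by_cases hy : Same hT m y m'
    · exact median_unique_aux c' hx (fun e => b (hy.trans e.symm))
    · exact median_unique_aux a' hx hy

end Tree

/-! ### Counting triples by their median -/

section Count

/-- Newton's identity for the third elementary symmetric function. -/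
lemma newton_three {α : Type*} [DecidableEq α] (s : Finset α) (f : α → ℤ) :
    6 * ∑ t ∈ s.powersetCard 3, ∏ u ∈ t, f u =
      (∑ u ∈ s, f u) ^ 3 - 3 * (∑ u ∈ s, f u) * (∑ u ∈ s, f u ^ 2) + 2 * ∑ u ∈ s, f u ^ 3 := by
  have succ : ∀ (k : ℕ) (a : α) (s : Finset α), a ∉ s →
      ∑ t ∈ (insert a s).powersetCard (k + 1), ∏ u ∈ t, f u =
        ∑ t ∈ s.powersetCard (k + 1), ∏ u ∈ t, f u +
          f a * ∑ t ∈ s.powersetCard k, ∏ u ∈ t, f u := by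
    intro k a s ha
    have hmem : ∀ j, ∀ t ∈ s.powersetCard j, a ∉ t :=
      fun j t ht hat => ha ((mem_powersetCard.1 ht).1 hat)
    rw [powersetCard_succ_insert ha, sum_union, sum_image, mul_sum]
    · congr 1
      exact sum_congr rfl fun t ht => prod_insert (hmem k t ht)
    · intro t ht t' ht' e
      rw [← erase_insert (hmem k t ht), ← erase_insert (hmem k t' ht'), e]
    · rw [disjoint_left]
      intro t ht ht'
      obtain ⟨t', -, rfl⟩ := mem_image.1 ht'
      exact hmem _ _ ht (mem_insert_self a t')
  have hE : ∀ k, ∑ t ∈ (∅ : Finset α).powersetCard (k + 1), ∏ u ∈ t, f u = 0 := by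
    intro k
    rw [powersetCard_eq_empty.2 (by simp), sum_empty]
  have e1 : ∀ s : Finset α, ∑ t ∈ s.powersetCard 1, ∏ u ∈ t, f u = ∑ u ∈ s, f u := by
    intro s
    simp [powersetCard_one]
  have e2 : ∀ s : Finset α, 2 * ∑ t ∈ s.powersetCard 2, ∏ u ∈ t, f u =
      (∑ u ∈ s, f u) ^ 2 - ∑ u ∈ s, f u ^ 2 := by
    intro s
    induction s using Finset.induction_on with
    | empty => simp [hE 1]
    | insert a s ha ih =>
      rw [succ 1 a s ha, e1, sum_insert ha, sum_insert ha]
      linear_combination ih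
  induction s using Finset.induction_on with
  | empty => simp [hE 2]
  | insert a s ha ih =>
    rw [succ 2 a s ha, sum_insert ha, sum_insert ha, sum_insert ha]
    linear_combination ih + 3 * f a * e2 s

variable {V : Type*} {G : SimpleGraph V}

/-- Indicator of `x` lying in the component of `u` after deletion of `p`. -/
noncomputable def ind [DecidableEq V] (hT : G.IsTree) (p u x : V) : ℤ := if branch hT p x = u then 1 else 0

open Classical in
/-- Indicator of `x` and `y` lying in a common component after deletion of `p`. -/
noncomputable def sameInd (hT : G.IsTree) (p x y : V) : ℤ := if Same hT p x y then 1 else 0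

/-- Indicator of `p` separating `x` and `y`. -/
noncomputable def sepInd (hT : G.IsTree) (p x y : V) : ℤ := 1 - sameInd hT p x y

lemma compCard_eq [Fintype V] [DecidableEq V] [DecidableRel G.Adj] (hT : G.IsTree) {p u : V} (hu : u ∈ G.neighborFinset p) :
    (compCardAvoiding G p u : ℤ) = ∑ x, ind hT p u x := by
  classical
  have hu' : G.Adj p u := by simpa using hu
  have : {x : V | ∃ w : G.Walk u x, p ∉ w.support} = {x | branch hT p x = u} :=
    Set.ext fun x => joined_iff hT hu' x
  simp only [compCardAvoiding, this, ind]
  simp [Fintype.card_subtype]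

lemma branch_mem [Fintype V] [DecidableRel G.Adj] (hT : G.IsTree) {p x : V} (h : x ≠ p) :
    branch hT p x ∈ G.neighborFinset p := by
  simpa using ((branch_spec hT p x).resolve_left fun e => h e.1).2.1

lemma sum_branch [Fintype V] [DecidableEq V] [DecidableRel G.Adj] (hT : G.IsTree) (p x : V) (f : V → ℤ) :
    ∑ u ∈ G.neighborFinset p, ind hT p u x * f u = if x = p then 0 else f (branch hT p x) := by
  by_cases h : x = p
  · have hb := (branch_eq_self_iff hT p x).2 h
    rw [if_pos h]
    refine sum_eq_zero fun u hu => ?_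
    have : p ≠ u := by rintro rfl; simp at hu
    simp [ind, hb, this]
  · have := branch_mem hT h
    simp only [ind, ite_mul, one_mul, zero_mul, sum_ite_eq, this, h, if_true, if_false]

lemma sameInd_eq [Fintype V] [DecidableEq V] [DecidableRel G.Adj] (hT : G.IsTree) (p x y : V) :
    sameInd hT p x y = ∑ u ∈ G.neighborFinset p, ind hT p u x * ind hT p u y := by
  rw [sum_branch]
  by_cases h : x = p <;> simp [sameInd, Same, ind, h, eq_comm]

lemma sameInd_mul [Fintype V] [DecidableEq V] [DecidableRel G.Adj] (hT : G.IsTree) (p x y z : V) :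
    sameInd hT p x y * sameInd hT p y z =
      ∑ u ∈ G.neighborFinset p, ind hT p u x * (ind hT p u y * ind hT p u z) := by
  rw [sum_branch]
  by_cases h : x = p
  · simp [sameInd, Same, h]
  · by_cases e : branch hT p x = branch hT p y
    · have : Same hT p x y := ⟨h, e⟩
      have hy := this.symm.1
      simp [sameInd, Same, ind, h, e, hy, eq_comm]
    · simp [sameInd, Same, ind, h, e, Ne.symm e]

lemma sepInd_mul (hT : G.IsTree) (p x y z : V) :
    sepInd hT p x y * sepInd hT p y z * sepInd hT p x z =
      1 - sameInd hT p x y - sameInd hT p y z - sameInd hT p x z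
        + 2 * (sameInd hT p x y * sameInd hT p y z) := by
  by_cases h1 : Same hT p x y <;> by_cases h2 : Same hT p y z
  · simp [sepInd, sameInd, h1, h2, h1.trans h2]
  · have h3 : ¬ Same hT p x z := fun e => h2 (h1.symm.trans e)
    simp [sepInd, sameInd, h1, h2, h3]
  · have h3 : ¬ Same hT p x z := fun e => h1 (e.trans h2.symm)
    simp [sepInd, sameInd, h1, h2, h3]
  · by_cases h3 : Same hT p x z <;> simp [sepInd, sameInd, h1, h2, h3]

lemma sum_sepInd [Fintype V] (hT : G.IsTree) (x y : V) : ∑ p, sepInd hT p x y = G.dist x y + 1 := by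
  classical
  obtain ⟨w, hw, hl⟩ := hT.connected.exists_path_of_dist x y
  have h : ∀ p, sepInd hT p x y = if p ∈ w.support.toFinset then 1 else 0 := by
    intro p
    simp only [List.mem_toFinset]
    by_cases hp : p ∈ w.support
    · simp [sepInd, sameInd, hp, (not_same_iff_mem (hT := hT) hw).2 hp]
    · have := mt (not_same_iff_mem (hT := hT) hw).1 hp
      simp [sepInd, sameInd, hp, not_not.1 this]
  simp_rw [h]
  rw [sum_ite_mem, univ_inter, sum_const, List.toFinset_card_of_nodup hw.support_nodup,
    SimpleGraph.Walk.length_support, hl]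
  simp

lemma sum_sepInd_mul [Fintype V] (hT : G.IsTree) (x y z : V) :
    ∑ p, sepInd hT p x y * sepInd hT p y z * sepInd hT p x z = 1 := by
  obtain ⟨m, hm⟩ := exists_median hT x y z
  rw [sum_eq_single m]
  · obtain ⟨a, b, c⟩ := hm
    simp [sepInd, sameInd, a, b, c]
  · intro p _ hp
    by_contra hne
    apply hp
    refine median_unique (hT := hT) (x := x) (y := y) (z := z) ?_ hm
    refine ⟨fun h => hne ?_, fun h => hne ?_, fun h => hne ?_⟩ <;> simp [sepInd, sameInd, h]
  · simp

/-- The number of triples with median `p`, in terms of the number of pairs separated by `p` and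
the third elementary symmetric function of the component sizes. -/
lemma local_count [Fintype V] [DecidableEq V] [DecidableRel G.Adj]
    (hT : G.IsTree) (p : V) :
    (∑ x, ∑ y, ∑ z, sepInd hT p x y * sepInd hT p y z * sepInd hT p x z)
        + 3 * (Fintype.card V : ℤ) =
      6 * (∑ s ∈ (G.neighborFinset p).powersetCard 3, ∏ u ∈ s, (compCardAvoiding G p u : ℤ))
        + 3 * (∑ x, ∑ y, sepInd hT p x y) + 1 := by
  set N := G.neighborFinset p
  set n : V → ℤ := fun u => (compCardAvoiding G p u : ℤ) with hn
  set v : ℤ := (Fintype.card V : ℤ) with hv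
  have hsum : ∀ u ∈ N, ∑ x, ind hT p u x = n u := fun u hu => (compCard_eq hT hu).symm
  have p1 : ∑ u ∈ N, n u = v - 1 := by
    rw [← sum_congr rfl hsum, sum_comm]
    have : ∀ x, ∑ u ∈ N, ind hT p u x = 1 - if x = p then 1 else 0 := by
      intro x
      have := sum_branch hT p x fun _ => 1
      simp only [mul_one] at this
      rw [this]
      split_ifs <;> simp
    simp [this, hv]
  have p2 : ∑ x, ∑ y, sameInd hT p x y = ∑ u ∈ N, n u ^ 2 := by
    simp_rw [sameInd_eq]
    simp_rw [sum_comm (s := univ) (t := G.neighborFinset p), ← mul_sum, ← sum_mul]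
    exact sum_congr rfl fun u hu => by rw [hsum u hu]; ring
  have p3 : ∑ x, ∑ y, ∑ z, sameInd hT p x y * sameInd hT p y z = ∑ u ∈ N, n u ^ 3 := by
    simp_rw [sameInd_mul]
    simp_rw [sum_comm (s := univ) (t := G.neighborFinset p), ← mul_sum, ← sum_mul]
    exact sum_congr rfl fun u hu => by rw [hsum u hu]; ring
  have hs : ∑ x, ∑ y, sepInd hT p x y = v ^ 2 - ∑ u ∈ N, n u ^ 2 := by
    rw [← p2]
    simp only [sepInd, sum_sub_distrib]
    simp [hv]
    ring
  have c3 : ∑ x, ∑ _y : V, ∑ z, sameInd hT p x z = v * ∑ x, ∑ z, sameInd hT p x z := by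
    simp [hv, mul_sum]
  have ht : ∑ x, ∑ y, ∑ z, sepInd hT p x y * sepInd hT p y z * sepInd hT p x z =
      v ^ 3 - 3 * v * ∑ u ∈ N, n u ^ 2 + 2 * ∑ u ∈ N, n u ^ 3 := by
    simp_rw [sepInd_mul, sum_add_distrib, sum_sub_distrib, c3, ← mul_sum _ _ (2 : ℤ), p3]
    simp only [sum_const, card_univ, nsmul_eq_mul, ← mul_sum, p2, mul_one]
    simp only [← hv]
    ring
  rw [newton_three, hs, ht, p1]
  ring

lemma global_count [Fintype V] [DecidableEq V] [DecidableRel G.Adj]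
    (hT : G.IsTree) :
    3 * (∑ p : V, ∑ q : V, G.dist p q)
      + 6 * (∑ p : V, ∑ s ∈ (G.neighborFinset p).powersetCard 3, ∏ u ∈ s, compCardAvoiding G p u)
      + Fintype.card V = Fintype.card V ^ 3 := by
  have h := sum_congr (rfl : (univ : Finset V) = univ) fun p _ => local_count hT p
  simp only [sum_add_distrib, ← mul_sum] at h
  have t : ∑ p, ∑ x, ∑ y, ∑ z, sepInd hT p x y * sepInd hT p y z * sepInd hT p x z =
      (Fintype.card V : ℤ) ^ 3 := by
    rw [sum_comm]
    have : ∀ x, ∑ p, ∑ y, ∑ z, sepInd hT p x y * sepInd hT p y z * sepInd hT p x z =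
        (Fintype.card V : ℤ) ^ 2 := by
      intro x
      rw [sum_comm, sum_congr rfl fun y _ => sum_comm]
      simp_rw [sum_sepInd_mul]
      simp [sq]
    simp_rw [this]
    simp [pow_succ']
  have d : ∑ p, ∑ x, ∑ y, sepInd hT p x y =
      (∑ x, ∑ y, (G.dist x y : ℤ)) + (Fintype.card V : ℤ) ^ 2 := by
    rw [sum_comm, sum_congr rfl fun x _ => sum_comm]
    simp_rw [sum_sepInd, sum_add_distrib]
    simp [sq]
  rw [t, d] at h
  simp only [sum_const, card_univ, nsmul_eq_mul, mul_one] at h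
  zify
  linear_combination -h

end Count

end DoyleGraver

/-- Doyle–Graver formula: for a tree `T` on `v` vertices with each edge of length 1,
`W(T) = v(v²-1)/6 - ∑_{p : deg(p) ≥ 3} ∑_{i<j<k} n_i(p) n_j(p) n_k(p)`, where the
`n_i(p)` are the numbers of vertices of the connected components of `T - p`.  The
components of `T - p` correspond to the neighbors of `p`, so the inner sum runs over
3-element subsets of the neighbors of `p` (this sum is empty when `deg(p) < 3`). -/
theorem wienerIndex_tree_doyle_graver {V : Type*} [Fintype V] [DecidableEq V]
    (G : SimpleGraph V) [DecidableRel G.Adj] (hT : G.IsTree) :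
    wienerIndex G = Fintype.card V * (Fintype.card V ^ 2 - 1) / 6 -
      ∑ p : V, ∑ s ∈ (G.neighborFinset p).powersetCard 3,
        ∏ u ∈ s, compCardAvoiding G p u := by
  have h := DoyleGraver.global_count hT
  unfold wienerIndex
  set D := ∑ p : V, ∑ q : V, G.dist p q
  set S := ∑ p : V, ∑ s ∈ (G.neighborFinset p).powersetCard 3, ∏ u ∈ s, compCardAvoiding G p u
  set v := Fintype.card V
  have hmul : v * (v ^ 2 - 1) = 3 * D + 6 * S := by
    have e : v * v ^ 2 = v ^ 3 := by ring
    rw [Nat.mul_sub, mul_one, e]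
    omega
  -- `v ^ 3` and `v` have the same parity, so the sum over ordered pairs is even.
  have hpar : v ^ 3 % 2 = v % 2 := by
    rcases Nat.mod_two_eq_zero_or_one v with e | e <;> simp [Nat.pow_mod, e]
  rw [hmul]
  omega
end

section
/- Let v and k be integers with v \ge 5 and 1 \le k \le v-4. Then, as an identity of rational numbers, v/(v-4) + \sum_{i=1}^{k-1} \left( (v-i)/(v-4-i) \cdot \prod_{j=1}^{i} (v-1-j)/(v-3-j) \right) = k\,(v^2-(k+2)v+k-1) / ((v-k-2)(v-k-3)). -/
/-! The inner product telescopes to `(v-2)(v-3) / ((v-2-i)(v-3-i))`. With this closed form the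
identity follows by induction on `k`: the difference of the right-hand side at `k + 1` and at `k`
is the summand at `i = k`, a rational function identity whose denominators are positive as long
as `k + 1 ≤ v - 4`. -/

theorem Icc_one_succ_int (n : ℤ) (hn : 0 ≤ n) :
    Finset.Icc (1 : ℤ) (n + 1) = insert (n + 1) (Finset.Icc (1 : ℤ) n) := by
  ext x
  simp only [Finset.mem_Icc, Finset.mem_insert]
  omega

theorem prod_telescope (v i : ℤ) (hi : 0 ≤ i) (hiv : i ≤ v - 4) :
    ∏ j ∈ Finset.Icc (1 : ℤ) i, ((v : ℚ) - 1 - (j : ℚ)) / ((v : ℚ) - 3 - (j : ℚ)) =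
      ((v : ℚ) - 2) * ((v : ℚ) - 3) / (((v : ℚ) - 2 - i) * ((v : ℚ) - 3 - i)) := by
  induction i, hi using Int.leInduction with
  | base =>
    have h : (4 : ℚ) ≤ v := by exact_mod_cast (by omega : (4 : ℤ) ≤ v)
    have h2 : (v : ℚ) - 2 ≠ 0 := by apply ne_of_gt; linarith
    have h3 : (v : ℚ) - 3 ≠ 0 := by apply ne_of_gt; linarith
    simp [h2, h3]
  | succ n hn ih =>
    have h : (n : ℚ) + 1 ≤ v - 4 := by exact_mod_cast hiv
    rw [Icc_one_succ_int n hn, Finset.prod_insert (by simp), ih (by omega)]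
    push_cast
    have h2 : (v : ℚ) - 2 - n ≠ 0 := by apply ne_of_gt; linarith
    have h3 : (v : ℚ) - 3 - n ≠ 0 := by apply ne_of_gt; linarith
    have h4 : (v : ℚ) - 2 - (n + 1) ≠ 0 := by apply ne_of_gt; linarith
    have h5 : (v : ℚ) - 3 - (n + 1) ≠ 0 := by apply ne_of_gt; linarith
    field_simp
    ring

/-- The identity of rational numbers
`v/(v-4) + ∑_{i=1}^{k-1} ( (v-i)/(v-4-i) · ∏_{j=1}^{i} (v-1-j)/(v-3-j) )
  = k (v² - (k+2) v + k - 1) / ((v-k-2)(v-k-3))`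
for integers `v ≥ 5` and `1 ≤ k ≤ v - 4`. -/
theorem contraction_coefficient_identity (v k : ℤ) (hv : 5 ≤ v) (hk1 : 1 ≤ k)
    (hk2 : k ≤ v - 4) :
    (v : ℚ) / ((v : ℚ) - 4) +
      ∑ i ∈ Finset.Icc (1 : ℤ) (k - 1),
        (((v : ℚ) - (i : ℚ)) / ((v : ℚ) - 4 - (i : ℚ)) *
          ∏ j ∈ Finset.Icc (1 : ℤ) i, ((v : ℚ) - 1 - (j : ℚ)) / ((v : ℚ) - 3 - (j : ℚ))) =
      (k : ℚ) * ((v : ℚ) ^ 2 - ((k : ℚ) + 2) * (v : ℚ) + (k : ℚ) - 1) /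
        (((v : ℚ) - (k : ℚ) - 2) * ((v : ℚ) - (k : ℚ) - 3)) := by
  induction k, hk1 using Int.leInduction with
  | base =>
    have h : (5 : ℚ) ≤ v := by exact_mod_cast hv
    have h3 : (v : ℚ) - 1 - 2 ≠ 0 := by apply ne_of_gt; linarith
    have h4 : (v : ℚ) - 1 - 3 ≠ 0 := by apply ne_of_gt; linarith
    have h5 : (v : ℚ) - 4 ≠ 0 := by apply ne_of_gt; linarith
    simp
    field_simp
    ring
  | succ n hn ih =>
    have h : (n : ℚ) + 1 ≤ v - 4 := by exact_mod_cast hk2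
    have e : n + 1 - 1 = (n - 1) + 1 := by ring
    rw [e, Icc_one_succ_int (n - 1) (by omega), Finset.sum_insert (by simp), sub_add_cancel,
      add_left_comm, ih (by omega), prod_telescope v n (by omega) (by omega)]
    push_cast
    have h1 : (v : ℚ) - n - 2 ≠ 0 := by apply ne_of_gt; linarith
    have h2 : (v : ℚ) - n - 3 ≠ 0 := by apply ne_of_gt; linarith
    have h3 : (v : ℚ) - 2 - n ≠ 0 := by apply ne_of_gt; linarith
    have h4 : (v : ℚ) - 3 - n ≠ 0 := by apply ne_of_gt; linarith
    have h5 : (v : ℚ) - 4 - n ≠ 0 := by apply ne_of_gt; linarith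
    have h6 : (v : ℚ) - (n + 1) - 2 ≠ 0 := by apply ne_of_gt; linarith
    have h7 : (v : ℚ) - (n + 1) - 3 ≠ 0 := by apply ne_of_gt; linarith
    field_simp
    ring
end

section
/- Let T be a tree with v vertices, each edge having length 1, and let d denote the graph distance. Then 2(v-1) = \sum_{p,q \in V(T)} (2-\deg(p))(2-\deg(q))\, d(p,q), where the sum runs over all ordered pairs of vertices and \deg denotes vertex degree. -/
/-!
Root the tree at a vertex `p` and write `d q` for the distance from `p` to `q`. Every `q ≠ p` has
exactly one neighbour closer to `p`, its parent, and every edge joins a vertex to its parent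
(`sum_parent`). Counting the sum `∑ q, deg q * d q` edge by edge, the edge from `q` to its parent
contributes `d q + (d q - 1)`, so the sum is `∑_{q ≠ p} (2 * d q - 1)`. Therefore
`∑ q, (2 - deg q) * d q = v - 1`, independently of `p` (`sum_two_sub_degree_mul_dist`).
The handshaking lemma gives `∑ p, (2 - deg p) = 2 * v - 2 * (v - 1) = 2`, and the double sum is the
product `2 * (v - 1)`.
-/

/-- In a tree rooted at `p`, every vertex other than the root has exactly one parent. -/
theorem existsUnique_parent {V : Type*} {G : SimpleGraph V} (hT : G.IsTree) {p q : V}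
    (hne : q ≠ p) : ∃! r, G.Adj q r ∧ G.dist p q = G.dist p r + 1 := by
  obtain ⟨w, hw⟩ := hT.connected.exists_walk_length_eq_dist q p
  cases w with
  | nil => exact absurd rfl hne
  | @cons _ r _ h w =>
    have h1 := G.dist_le w
    rw [SimpleGraph.Walk.length_cons, G.dist_comm] at hw
    rw [G.dist_comm] at h1
    have h2 := hT.dist_eq_dist_add_one_of_adj p h
    refine ⟨r, ⟨h, by omega⟩, ?_⟩
    rintro s ⟨hs, hds⟩
    obtain ⟨a, ha⟩ := hT.connected.exists_walk_length_eq_dist p r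
    obtain ⟨b, hb⟩ := hT.connected.exists_walk_length_eq_dist p s
    -- Shortest walks to `r` and `s`, prolonged to `q`, are both the path from `p` to `q`.
    have hpa := (a.concat h.symm).isPath_of_length_eq_dist
      (by rw [SimpleGraph.Walk.length_concat]; omega)
    have hpb := (b.concat hs.symm).isPath_of_length_eq_dist
      (by rw [SimpleGraph.Walk.length_concat]; omega)
    have heq := (hT.existsUnique_path p q).unique hpa hpb
    have := congrArg SimpleGraph.Walk.penultimate heq
    simpa using this.symm

/-- Summing over pairs (child, parent) in the tree rooted at `p` amounts to summing over the
vertices other than `p`, when the summand depends on the child only. -/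
theorem sum_parent {V : Type*} [Fintype V] [DecidableEq V] {G : SimpleGraph V}
    [DecidableRel G.Adj] (hT : G.IsTree) (p : V) (f : V → ℤ) :
    ∑ q, ∑ r, (if G.Adj q r ∧ G.dist p q = G.dist p r + 1 then f q else 0) =
      ∑ q, if q = p then 0 else f q := by
  refine Finset.sum_congr rfl fun q _ => ?_
  split_ifs with hq
  · subst hq
    simp
  · obtain ⟨r, hr, hu⟩ := existsUnique_parent hT hq
    rw [Finset.sum_eq_single r (fun s _ hs => if_neg fun h => hs (hu s h)) (by simp), if_pos hr]

/-- The weighted sum of distances from a fixed vertex `p` does not depend on `p`. -/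
theorem sum_two_sub_degree_mul_dist {V : Type*} [Fintype V] {G : SimpleGraph V}
    [DecidableRel G.Adj] (hT : G.IsTree) (p : V) :
    ∑ q, (2 - (G.degree q : ℤ)) * (G.dist p q : ℤ) = (Fintype.card V : ℤ) - 1 := by
  classical
  have hdeg : ∑ q, (G.degree q : ℤ) * (G.dist p q : ℤ) =
      ∑ q, ∑ r, if G.Adj q r then (G.dist p q : ℤ) else 0 := by
    refine Finset.sum_congr rfl fun q _ => ?_
    rw [← Finset.sum_filter, Finset.sum_const, nsmul_eq_mul, ← G.card_neighborFinset_eq_degree,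
      G.neighborFinset_eq_filter]
  -- In an adjacent pair exactly one of the two vertices is the parent of the other.
  have hsplit : ∀ q r, (if G.Adj q r then (G.dist p q : ℤ) else 0) =
      (if G.Adj q r ∧ G.dist p q = G.dist p r + 1 then (G.dist p q : ℤ) else 0) +
      (if G.Adj r q ∧ G.dist p r = G.dist p q + 1 then (G.dist p r : ℤ) - 1 else 0) := by
    intro q r
    by_cases h : G.Adj q r
    · rcases hT.dist_eq_dist_add_one_of_adj p h with h1 | h1
      · simp [h, h.symm, h1]
        omega
      · simp [h, h.symm, h1]
        omega
    · simp [h, G.adj_comm r q]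
  have hsum : ∑ q, (G.degree q : ℤ) * (G.dist p q : ℤ) =
      ∑ q, (2 * (G.dist p q : ℤ) - if q = p then 0 else 1) := by
    simp_rw [hdeg, hsplit, Finset.sum_add_distrib]
    rw [sum_parent hT p fun q => (G.dist p q : ℤ), Finset.sum_comm,
      sum_parent hT p fun q => (G.dist p q : ℤ) - 1, ← Finset.sum_add_distrib]
    refine Finset.sum_congr rfl fun q _ => ?_
    split_ifs with hq
    · simp [hq]
    · ring
  have hcard : ∑ q : V, (if q = p then (0 : ℤ) else 1) = Fintype.card V - 1 := by
    have h : ∀ q : V, (if q = p then (0 : ℤ) else 1) = 1 - if q = p then 1 else 0 := by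
      intro q; split_ifs <;> simp
    simp [h, Finset.sum_sub_distrib]
  rw [Finset.sum_sub_distrib] at hsum
  simp_rw [sub_mul, Finset.sum_sub_distrib]
  rw [hsum, hcard]
  ring

/-- For a tree `T` on `v` vertices with each edge of length 1,
`2(v-1) = ∑_{p,q} (2 - deg(p))(2 - deg(q)) d(p,q)` (ordered pairs). -/
theorem tree_sum_two_sub_degree_sq_mul_dist {V : Type*} [Fintype V]
    (G : SimpleGraph V) [DecidableRel G.Adj] (hT : G.IsTree) :
    2 * ((Fintype.card V : ℤ) - 1) =
      ∑ p : V, ∑ q : V,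
        (2 - (G.degree p : ℤ)) * (2 - (G.degree q : ℤ)) * (G.dist p q : ℤ) := by
  simp_rw [mul_assoc, ← Finset.mul_sum, sum_two_sub_degree_mul_dist hT, ← Finset.sum_mul]
  congr 1
  have h1 : ∑ p, (G.degree p : ℤ) = 2 * (G.edgeFinset.card : ℤ) := by
    exact_mod_cast G.sum_degrees_eq_twice_card_edges
  have h2 : (G.edgeFinset.card : ℤ) + 1 = Fintype.card V := by
    exact_mod_cast hT.card_edgeFinset
  rw [Finset.sum_sub_distrib, h1]
  simp only [Finset.sum_const, Finset.card_univ, nsmul_eq_mul]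
  linarith
end
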